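/- arXiv:1802.00659 — 5 statements merged into one kernel-verified Lean document; each statement's English description precedes it below -/
import Mathlib

section
/- Let G be a finite group with N elements, let X ⊆ G, and let y be an element of the subsemigroup of G generated by X. Then there exists a product straight-line program over X in G of length at most 2(log₂ N + 1)³ computing y. -/
namespace SLP

/-- Programs as lists, newest element first. -/
inductive Prog {G : Type*} [Group G] (X : Set G) : List G → Prop
  | nil : Prog X []
  | gen {l : List G} {x : G} : Prog X l → x ∈ X → Prog X (x :: l)
  | mul {l : List G} {a b : G} : Prog X l → a ∈ l → b ∈ l → Prog X (a * b :: l)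

variable {G : Type*} [Group G] {X : Set G}

/-- From `l` one can reach `y` at extra cost `c`. -/
def Can (X : Set G) (l : List G) (c : ℕ) (y : G) : Prop :=
  ∃ l', Prog X l' ∧ l ⊆ l' ∧ l'.length ≤ l.length + c ∧ y ∈ l'

theorem can_pow {l : List G} (hl : Prog X l) {a : G} (ha : a ∈ l) (k : ℕ) (hk : 1 ≤ k) :
    Can X l (2 * Nat.log 2 k) (a ^ k) := by
  induction k using Nat.strong_induction_on with
  | _ k ih =>
    by_cases h1 : k = 1
    · subst h1
      exact ⟨l, hl, fun _ h => h, by simp, by simpa using ha⟩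
    · obtain ⟨l', hp, hs, hlen, hm⟩ := ih (k / 2) (by omega) (by omega)
      have hlog : Nat.log 2 k = Nat.log 2 (k / 2) + 1 :=
        Nat.log_of_one_lt_of_le (by norm_num) (by omega)
      have h2 := Prog.mul hp hm hm
      rcases Nat.mod_two_eq_zero_or_one k with h0 | h0
      · refine ⟨_, h2, fun x hx => List.mem_cons_of_mem _ (hs hx), ?_, ?_⟩
        · simp only [List.length_cons]; omega
        · rw [← pow_add, show k / 2 + k / 2 = k by omega]; simp
      · have h3 := Prog.mul h2 List.mem_cons_self (List.mem_cons_of_mem _ (hs ha))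
        refine ⟨_, h3, fun x hx => List.mem_cons_of_mem _ (List.mem_cons_of_mem _ (hs hx)), ?_, ?_⟩
        · simp only [List.length_cons]; omega
        · rw [← pow_add, ← pow_succ, show k / 2 + k / 2 + 1 = k by omega]; simp

theorem can_inv [Fintype G] {l : List G} (hl : Prog X l) (h1 : (1 : G) ∈ l) {a : G} (ha : a ∈ l) :
    Can X l (2 * Nat.log 2 (Fintype.card G)) a⁻¹ := by
  have hpos : 0 < Fintype.card G := Fintype.card_pos
  have hinv : a⁻¹ = a ^ (Fintype.card G - 1) := by
    rw [inv_eq_iff_mul_eq_one, ← pow_succ', Nat.sub_add_cancel hpos, pow_card_eq_one]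
  by_cases h : Fintype.card G = 1
  · refine ⟨l, hl, fun _ h => h, by omega, ?_⟩
    rw [hinv, h]; simpa using h1
  · obtain ⟨l', hp, hs, hlen, hm⟩ := can_pow hl ha (Fintype.card G - 1) (by omega)
    have := Nat.log_mono_right (b := 2) (Nat.sub_le (Fintype.card G) 1)
    exact ⟨l', hp, hs, by omega, hinv ▸ hm⟩

open Classical in
/-- The cube of a list. -/
noncomputable def cube : List G → Finset G
  | [] => {1}
  | z :: zs => cube zs ∪ (cube zs).image (fun k => k * z)

theorem one_mem_cube (zs : List G) : (1 : G) ∈ cube zs := by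
  induction zs with
  | nil => simp [cube]
  | cons z zs ih => simp [cube, ih]

theorem can_cube (zs : List G) {l : List G} (hl : Prog X l) (h1 : (1 : G) ∈ l) (hz : zs ⊆ l)
    {a : G} (ha : a ∈ cube zs) : Can X l zs.length a := by
  induction zs generalizing a with
  | nil =>
    simp only [cube, Finset.mem_singleton] at ha
    exact ⟨l, hl, fun _ h => h, by simp, ha ▸ h1⟩
  | cons z zs ih =>
    have hz' : zs ⊆ l := fun x hx => hz (List.mem_cons_of_mem _ hx)
    simp only [cube, Finset.mem_union, Finset.mem_image] at ha
    rcases ha with ha | ⟨k, hk, rfl⟩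
    · obtain ⟨l', hp, hs, hlen, hm⟩ := ih hz' ha
      exact ⟨l', hp, hs, by simp only [List.length_cons]; omega, hm⟩
    · obtain ⟨l', hp, hs, hlen, hm⟩ := ih hz' hk
      exact ⟨_, Prog.mul hp hm (hs (hz List.mem_cons_self)),
        fun x hx => List.mem_cons_of_mem _ (hs hx),
        by simp only [List.length_cons]; omega, List.mem_cons_self⟩

theorem can_quot [Fintype G] (zs : List G) {l : List G} (hl : Prog X l) (h1 : (1 : G) ∈ l)
    (hz : zs ⊆ l) {a b : G} (ha : a ∈ cube zs) (hb : b ∈ cube zs) :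
    Can X l (2 * zs.length + 2 * Nat.log 2 (Fintype.card G) + 1) (a⁻¹ * b) := by
  obtain ⟨l1, hp1, hs1, hlen1, hm1⟩ := can_cube zs hl h1 hz ha
  obtain ⟨l2, hp2, hs2, hlen2, hm2⟩ := can_inv hp1 (hs1 h1) hm1
  obtain ⟨l3, hp3, hs3, hlen3, hm3⟩ :=
    can_cube zs hp2 (hs2 (hs1 h1)) (fun x hx => hs2 (hs1 (hz hx))) hb
  exact ⟨_, Prog.mul hp3 (hs3 hm2) hm3,
    fun x hx => List.mem_cons_of_mem _ (hs3 (hs2 (hs1 hx))),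
    by simp only [List.length_cons]; omega, List.mem_cons_self⟩

/-- Stage `i` of the construction. -/
def Stage [Fintype G] (X : Set G) (i : ℕ) (zs l : List G) : Prop :=
  Prog X l ∧ (1 : G) ∈ l ∧ zs ⊆ l ∧ zs.length = i ∧ (cube zs).card = 2 ^ i ∧
    l.length ≤ (2 * Nat.log 2 (Fintype.card G) + 1) +
      (i * i + 2 * i + 2 * Nat.log 2 (Fintype.card G) * i)

theorem stage_zero [Fintype G] {x : G} (hx : x ∈ X) : ∃ zs l, Stage X 0 zs l := by
  obtain ⟨l, hp, hs, hlen, hm⟩ := can_pow (Prog.gen Prog.nil hx) (a := x) (by simp)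
    (Fintype.card G) Fintype.card_pos
  rw [pow_card_eq_one] at hm
  refine ⟨[], l, hp, hm, by simp, rfl, by simp [cube], ?_⟩
  simp only [List.length_cons, List.length_nil] at hlen
  omega

theorem stage_succ [Fintype G] {i : ℕ} {zs l : List G} (h : Stage X i zs l) {a b x : G}
    (ha : a ∈ cube zs) (hb : b ∈ cube zs) (hx : x ∈ X)
    (hn : ∀ c ∈ cube zs, ∀ d ∈ cube zs, a⁻¹ * b * x ≠ c⁻¹ * d) :
    ∃ zs l, Stage X (i + 1) zs l := by
  classical
  obtain ⟨hp, h1, hz, hi, hc, hlen⟩ := h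
  obtain ⟨l', hp', hs', hlen', hm'⟩ := can_quot zs hp h1 hz ha hb
  have hq := Prog.mul (Prog.gen hp' hx) (List.mem_cons_of_mem _ hm') List.mem_cons_self
  refine ⟨(a⁻¹ * b * x) :: zs, _, hq, ?_, ?_, by simp [hi], ?_, ?_⟩
  · exact List.mem_cons_of_mem _ (List.mem_cons_of_mem _ (hs' h1))
  · intro t ht
    rcases List.mem_cons.1 ht with rfl | ht
    · exact List.mem_cons_self
    · exact List.mem_cons_of_mem _ (List.mem_cons_of_mem _ (hs' (hz ht)))
  · have hd : Disjoint (cube zs) ((cube zs).image (fun k => k * (a⁻¹ * b * x))) := by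
      rw [Finset.disjoint_left]
      intro d hd hd'
      obtain ⟨c, hcc, hcd⟩ := Finset.mem_image.1 hd'
      exact hn c hcc d hd (eq_inv_mul_of_mul_eq hcd)
    have : (cube ((a⁻¹ * b * x) :: zs)) =
      cube zs ∪ (cube zs).image (fun k => k * (a⁻¹ * b * x)) := by
      simp only [cube]
    rw [this, Finset.card_union_of_disjoint hd,
      Finset.card_image_of_injective _ (mul_left_injective _), hc, pow_succ]
    ring
  · simp only [List.length_cons]
    rw [hi] at hlen'
    nlinarith

theorem main [Fintype G] {y : G} (hy : y ∈ Subsemigroup.closure X) :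
    ∃ l, Prog X l ∧ y ∈ l ∧
      l.length ≤ 3 * Nat.log 2 (Fintype.card G) * Nat.log 2 (Fintype.card G) +
        8 * Nat.log 2 (Fintype.card G) + 2 := by
  classical
  set L := Nat.log 2 (Fintype.card G) with hL
  have hX : ∃ x, x ∈ X := by
    by_contra hne
    have : X = ∅ := Set.eq_empty_of_forall_notMem fun x hx => hne ⟨x, hx⟩
    rw [this, Subsemigroup.closure_empty] at hy
    exact hy
  obtain ⟨x0, hx0⟩ := hX
  have hbd : ∀ i, (∃ zs l, Stage X i zs l) → i ≤ L := by
    rintro i ⟨zs, l, h⟩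
    have h2 : 2 ^ i ≤ Fintype.card G := h.2.2.2.2.1 ▸ Finset.card_le_univ _
    exact Nat.le_log_of_pow_le (by norm_num) h2
  obtain ⟨i, hi, hmax⟩ : ∃ i, (∃ zs l, Stage X i zs l) ∧ ¬ ∃ zs l, Stage X (i + 1) zs l := by
    by_contra hcon
    push Not at hcon
    have : ∀ i, ∃ zs l, Stage X i zs l := by
      intro i
      induction i with
      | zero => exact stage_zero hx0
      | succ i ih => 
        obtain ⟨zs, l, h⟩ := ih
        exact hcon i ⟨zs, l, h⟩
    have := hbd (L + 1) (this _)
    omega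
  have hiL := hbd i hi
  obtain ⟨zs, l, h⟩ := hi
  have key : ∀ u, (∃ a ∈ cube zs, ∃ b ∈ cube zs, u = a⁻¹ * b) →
      (∃ a ∈ cube zs, ∃ b ∈ cube zs, u * y = a⁻¹ * b) := by
    induction hy using Subsemigroup.closure_induction with
    | mem x hx =>
      rintro u ⟨a, ha, b, hb, rfl⟩
      by_contra hcon
      exact hmax (stage_succ h ha hb hx fun c hc d hd he => hcon ⟨c, hc, d, hd, he⟩)
    | mul p q _ _ hp hq =>
      intro u hu
      rw [← mul_assoc]
      exact hq _ (hp u hu)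
  obtain ⟨a, ha, b, hb, hab⟩ := key 1 ⟨1, one_mem_cube zs, 1, one_mem_cube zs, by simp⟩
  rw [one_mul] at hab
  obtain ⟨hp, h1, hz, hlz, -, hlen⟩ := h
  obtain ⟨l', hp', -, hlen', hm'⟩ := can_quot zs hp h1 hz ha hb
  refine ⟨l', hp', hab ▸ hm', ?_⟩
  rw [← hL] at hlen hlen'
  rw [hlz] at hlen'
  nlinarith [Nat.mul_le_mul hiL hiL, Nat.mul_le_mul_left L hiL]

/-- Truncate so that `y` is the newest element. -/
theorem trunc {l : List G} (hl : Prog X l) {y : G} (hy : y ∈ l) :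
    ∃ l', Prog X (y :: l') ∧ l'.length + 1 ≤ l.length := by
  induction hl with
  | nil => simp at hy
  | @gen l x hp hx ih =>
    rcases List.mem_cons.1 hy with rfl | h
    · exact ⟨l, Prog.gen hp hx, by simp⟩
    · obtain ⟨l', h1, h2⟩ := ih h
      exact ⟨l', h1, by simp only [List.length_cons]; omega⟩
  | @mul l a b hp ha hb ih =>
    rcases List.mem_cons.1 hy with rfl | h
    · exact ⟨l, Prog.mul hp ha hb, by simp⟩
    · obtain ⟨l', h1, h2⟩ := ih h
      exact ⟨l', h1, by simp only [List.length_cons]; omega⟩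

theorem toFin {l : List G} (hl : Prog X l) :
    ∃ g : Fin l.length → G,
      (∀ i, g i ∈ X ∨ ∃ p q, p < i ∧ q < i ∧ g i = g p * g q) ∧
      (∀ a ∈ l, ∃ i, g i = a) ∧
      (∀ h : 0 < l.length, g ⟨l.length - 1, by omega⟩ = l.head (List.length_pos_iff.1 h)) := by
  have aux : ∀ (l : List G) (c : G) (g : Fin l.length → G),
      (∀ i, g i ∈ X ∨ ∃ p q, p < i ∧ q < i ∧ g i = g p * g q) →
      (∀ a ∈ l, ∃ i, g i = a) → (c ∈ X ∨ ∃ a ∈ l, ∃ b ∈ l, c = a * b) →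
      ∃ g : Fin (c :: l).length → G,
      (∀ i, g i ∈ X ∨ ∃ p q, p < i ∧ q < i ∧ g i = g p * g q) ∧
      (∀ a ∈ c :: l, ∃ i, g i = a) ∧
      (∀ h : 0 < (c :: l).length, g ⟨(c :: l).length - 1, by omega⟩ =
        (c :: l).head (List.length_pos_iff.1 h)) := by
    intro l c g hg hm hc
    refine ⟨Fin.snoc (α := fun _ => G) g c, ?_, ?_, ?_⟩
    · intro i
      refine Fin.lastCases ?_ (fun j => ?_) i
      · rcases hc with hc | ⟨a, ha, b, hb, hc⟩
        · left; simpa using hc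
        · right
          obtain ⟨p, rfl⟩ := hm a ha
          obtain ⟨q, rfl⟩ := hm b hb
          exact ⟨p.castSucc, q.castSucc, Fin.castSucc_lt_last p, Fin.castSucc_lt_last q,
            by simpa using hc⟩
      · rcases hg j with h | ⟨p, q, hp, hq, h⟩
        · left; simpa using h
        · right
          exact ⟨p.castSucc, q.castSucc, hp, hq, by simpa using h⟩
    · intro a ha
      rcases List.mem_cons.1 ha with rfl | ha
      · exact ⟨Fin.last _, by simp⟩
      · obtain ⟨i, rfl⟩ := hm a ha
        exact ⟨i.castSucc, by simp⟩
    · intro _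
      exact Fin.snoc_last (α := fun _ => G) c g
  induction hl with
  | nil => exact ⟨fun _ => 1, fun i => i.elim0, by simp, by simp⟩
  | gen hp hx ih =>
    obtain ⟨g, h1, h2, -⟩ := ih
    exact aux _ _ g h1 h2 (Or.inl hx)
  | mul hp ha hb ih =>
    obtain ⟨g, h1, h2, -⟩ := ih
    exact aux _ _ g h1 h2 (Or.inr ⟨_, ha, _, hb, rfl⟩)

end SLP

/-- The variety of finite groups has the poly-logarithmic circuits property,
expressed via product straight-line programs: if `G` is a finite group with `N`
elements, `X ⊆ G` and `y` lies in the subsemigroup of `G` generated by `X`,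
then there is a product straight-line program over `X` in `G` (a sequence
`g : Fin (m + 1) → G`, of length `m + 1`, in which every element is in `X` or a
product of two earlier elements) of length at most `2 (log₂ N + 1)³` whose last
element is `y`. -/
theorem group_polylog_straight_line_program {G : Type*} [Group G] [Fintype G]
    (X : Set G) (y : G) (hy : y ∈ Subsemigroup.closure X) :
    ∃ (m : ℕ) (g : Fin (m + 1) → G),
      (∀ i, g i ∈ X ∨ ∃ p q, p < i ∧ q < i ∧ g i = g p * g q) ∧
      ((m + 1 : ℕ) : ℝ) ≤ 2 * (Real.logb 2 (Fintype.card G) + 1) ^ 3 ∧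
      g (Fin.last m) = y := by
  obtain ⟨l, hp, hm, hlen⟩ := SLP.main hy
  obtain ⟨l', hp', hlen'⟩ := SLP.trunc hp hm
  obtain ⟨g, h1, -, h3⟩ := SLP.toFin hp'
  refine ⟨l'.length, g, h1, ?_, h3 (by simp)⟩
  have hb : ((Nat.log 2 (Fintype.card G) : ℕ) : ℝ) ≤ Real.logb 2 (Fintype.card G) := by
    exact_mod_cast Real.natLog_le_logb (Fintype.card G) 2
  set L := Nat.log 2 (Fintype.card G)
  have hn : l'.length + 1 ≤ 2 * (L + 1) ^ 3 := by
    refine (hlen'.trans hlen).trans ?_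
    rcases Nat.eq_zero_or_pos L with h | h
    · simp [h]
    · nlinarith [Nat.mul_le_mul h h, Nat.zero_le (L ^ 3)]
  calc ((l'.length + 1 : ℕ) : ℝ) ≤ ((2 * (L + 1) ^ 3 : ℕ) : ℝ) := by exact_mod_cast hn
    _ = 2 * ((L : ℝ) + 1) ^ 3 := by push_cast; ring
    _ ≤ _ := by gcongr
end

section
/- Let S be a finite semigroup with N ≥ 2 elements, let X ⊆ S, and suppose y ∈ S can be written as y = x_1^{i_1} ⋯ x_k^{i_k} with x_1, …, x_k ∈ X, positive exponents 1 ≤ i_j ≤ N for all j, and k ≤ log₂ N. Then there exists a product straight-line program over X in S of length less than 5 (log₂ N)² computing y. -/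
/-- Reversed straight-line programs, as lists with the newest element first. -/
inductive RevProg {S : Type*} [Semigroup S] (X : Set S) : List S → Prop
  | nil : RevProg X []
  | cons (s : S) (l : List S) (hl : RevProg X l)
      (hs : s ∈ X ∨ ∃ a ∈ l, ∃ b ∈ l, s = a * b) : RevProg X (s :: l)

theorem RevProg.pow_aux {S : Type*} [Semigroup S] {X : Set S} {l : List S}
    (hl : RevProg X l) {x : S} (hx : x ∈ X) (n : ℕ) (hn : 1 ≤ n) :
    ∃ s l', RevProg X (s :: l') ∧ l ⊆ s :: l' ∧ x ∈ s :: l' ∧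
      l'.length ≤ l.length + 2 * Nat.log 2 n ∧ (s : WithOne S) = (x : WithOne S) ^ n := by
  induction n using Nat.strong_induction_on with
  | _ n ih =>
    rcases Nat.lt_or_ge n 2 with h2 | h2
    · obtain rfl : n = 1 := by omega
      exact ⟨x, l, .cons x l hl (Or.inl hx), by simp, by simp, by simp, by simp⟩
    · obtain ⟨s, l', hp, hsub, hxm, hlen, hs⟩ := ih (n / 2) (by omega) (by omega)
      have hlog : Nat.log 2 n = Nat.log 2 (n / 2) + 1 := Nat.log_of_one_lt_of_le (by norm_num) h2
      have hp2 : RevProg X (s * s :: s :: l') :=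
        .cons _ _ hp (Or.inr ⟨s, by simp, s, by simp, rfl⟩)
      rcases Nat.mod_two_eq_zero_or_one n with h | h
      · refine ⟨s * s, s :: l', hp2, fun a ha => List.mem_cons_of_mem _ (hsub ha),
          List.mem_cons_of_mem _ hxm, ?_, ?_⟩
        · simp only [List.length_cons]; omega
        · rw [WithOne.coe_mul, hs, ← pow_add]; congr 1; omega
      · refine ⟨s * s * x, s * s :: s :: l', .cons _ _ hp2 (Or.inr ⟨s * s, by simp, x,
          List.mem_cons_of_mem _ hxm, rfl⟩),
          fun a ha => List.mem_cons_of_mem _ (List.mem_cons_of_mem _ (hsub ha)),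
          List.mem_cons_of_mem _ (List.mem_cons_of_mem _ hxm), ?_, ?_⟩
        · simp only [List.length_cons]; omega
        · rw [WithOne.coe_mul, WithOne.coe_mul, hs, ← pow_add, ← pow_succ]; congr 1; omega

theorem RevProg.prod_aux {S : Type*} [Semigroup S] {X : Set S} (N k : ℕ) :
    ∀ (x : Fin k → S) (i : Fin k → ℕ) (_ : ∀ j, x j ∈ X) (_ : ∀ j, 1 ≤ i j ∧ i j ≤ N)
      (s : S) (l : List S) (_ : RevProg X (s :: l)),
    ∃ s' l', RevProg X (s' :: l') ∧ l'.length ≤ l.length + k * (2 * Nat.log 2 N + 2) ∧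
      (s' : WithOne S) = s * (List.ofFn fun j => (x j : WithOne S) ^ (i j)).prod := by
  induction k with
  | zero => intro x i _ _ s l h; exact ⟨s, l, h, by simp, by simp⟩
  | succ k ih =>
    intro x i hx hi s l h
    obtain ⟨t, l1, hp, hsub, -, hlen, ht⟩ := h.pow_aux (hx 0) (i 0) (hi 0).1
    have hlog : Nat.log 2 (i 0) ≤ Nat.log 2 N := Nat.log_mono_right (hi 0).2
    obtain ⟨s', l', hp', hlen', hs'⟩ := ih (fun j => x j.succ) (fun j => i j.succ)
      (fun j => hx _) (fun j => hi _) (s * t) (t :: l1)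
      (.cons _ _ hp (Or.inr ⟨s, hsub (by simp), t, by simp, rfl⟩))
    refine ⟨s', l', hp', ?_, ?_⟩
    · simp only [List.length_cons] at hlen hlen'
      rw [add_mul, one_mul]
      omega
    · rw [hs', List.ofFn_succ, List.prod_cons, WithOne.coe_mul, ht, mul_assoc]

theorem RevProg.toFun_aux {S : Type*} [Semigroup S] {X : Set S} (s : S) (l : List S)
    (h : RevProg X l) :
    ∃ g : ℕ → S, (∀ a < l.length, g a ∈ X ∨ ∃ p q, p < a ∧ q < a ∧ g a = g p * g q) ∧
      (∀ t ∈ l, ∃ p < l.length, g p = t) ∧ ∀ t u, l = t :: u → g u.length = t := by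
  induction h with
  | nil => exact ⟨fun _ => s, by simp, by simp, by simp⟩
  | cons s l hl hs ih =>
    obtain ⟨g, h1, h2, -⟩ := ih
    have hlt : ∀ p < l.length, Function.update g l.length s p = g p := fun p hp =>
      Function.update_of_ne hp.ne _ _
    refine ⟨Function.update g l.length s, ?_, ?_, ?_⟩
    · intro a ha
      simp only [List.length_cons] at ha
      rcases Nat.lt_succ_iff_lt_or_eq.mp ha with ha | rfl
      · rw [hlt a ha]
        rcases h1 a ha with h | ⟨p, q, hp, hq, h⟩
        · exact Or.inl h
        · exact Or.inr ⟨p, q, hp, hq, by rw [hlt p (by omega), hlt q (by omega), h]⟩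
      · rw [Function.update_self]
        rcases hs with h | ⟨b, hb, c, hc, h⟩
        · exact Or.inl h
        · obtain ⟨p, hp, rfl⟩ := h2 b hb
          obtain ⟨q, hq, rfl⟩ := h2 c hc
          exact Or.inr ⟨p, q, hp, hq, by rw [hlt p hp, hlt q hq, h]⟩
    · intro t ht
      rcases List.mem_cons.mp ht with rfl | ht
      · exact ⟨l.length, by simp, Function.update_self ..⟩
      · obtain ⟨p, hp, rfl⟩ := h2 t ht
        exact ⟨p, by simp; omega, hlt p hp⟩
    · intro t u h
      obtain ⟨rfl, rfl⟩ := List.cons.inj h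
      exact Function.update_self ..

/-- If `S` is a finite semigroup with `N ≥ 2` elements, `X ⊆ S`, and
`y = x₁^{i₁} ⋯ x_k^{i_k}` with `x₁, …, x_k ∈ X`, `1 ≤ i_j ≤ N` and
`k ≤ log₂ N`, then there is a product straight-line program over `X` in `S`
(a sequence `g : Fin (m + 1) → S`, of length `m + 1`, in which every element is
in `X` or a product of two earlier elements) of length less than `5 (log₂ N)²`
whose last element is `y`.  The (ordered) product of powers with positive
exponents is expressed in the monoid `WithOne S`, whose coercion from `S` is
injective and multiplicative. -/
theorem logPowerBasis_polylog_straight_line_program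
    {S : Type*} [Semigroup S] [Fintype S]
    (hN : 2 ≤ Fintype.card S) (X : Set S) (y : S) (k : ℕ)
    (x : Fin k → S) (i : Fin k → ℕ)
    (hx : ∀ j, x j ∈ X) (hi : ∀ j, 1 ≤ i j ∧ i j ≤ Fintype.card S)
    (hk : (k : ℝ) ≤ Real.logb 2 (Fintype.card S))
    (hy : (y : WithOne S) = (List.ofFn fun j => (x j : WithOne S) ^ (i j)).prod) :
    ∃ (m : ℕ) (g : Fin (m + 1) → S),
      (∀ a, g a ∈ X ∨ ∃ p q, p < a ∧ q < a ∧ g a = g p * g q) ∧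
      ((m + 1 : ℕ) : ℝ) < 5 * (Real.logb 2 (Fintype.card S)) ^ 2 ∧
      g (Fin.last m) = y := by
  obtain _ | k := k
  · simp at hy
  obtain ⟨t, l1, hp, -, -, hlen, ht⟩ := (RevProg.nil (X := X)).pow_aux (hx 0) (i 0) (hi 0).1
  obtain ⟨s, l, hP, hlen', hs⟩ := RevProg.prod_aux (Fintype.card S) k (fun j => x j.succ)
    (fun j => i j.succ) (fun j => hx _) (fun j => hi _) t l1 hp
  have hsy : s = y := by
    apply WithOne.coe_inj.mp
    rw [hs, hy, List.ofFn_succ, List.prod_cons, ht]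
  subst hsy
  obtain ⟨g, h1, -, h3⟩ := RevProg.toFun_aux s _ hP
  refine ⟨l.length, fun a => g a, ?_, ?_, ?_⟩
  · intro a
    rcases h1 a a.2 with h | ⟨p, q, hp, hq, h⟩
    · exact Or.inl h
    · exact Or.inr ⟨⟨p, hp.trans a.2⟩, ⟨q, hq.trans a.2⟩, hp, hq, h⟩
  · set N := Fintype.card S with hNdef
    set R := Real.logb 2 N with hR
    have hlog : Nat.log 2 (i 0) ≤ Nat.log 2 N := Nat.log_mono_right (hi 0).2
    have hL : ((Nat.log 2 N : ℕ) : ℝ) ≤ R := by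
      exact_mod_cast Real.natLog_le_logb N 2
    have hR1 : (1 : ℝ) ≤ R := by
      push_cast at hk
      linarith [(Nat.cast_nonneg k : (0 : ℝ) ≤ k)]
    have hm : l.length + 2 ≤ (k + 1) * (2 * Nat.log 2 N + 2) := by
      simp only [List.length_nil] at hlen
      rw [add_mul, one_mul]
      omega
    have hm' : (l.length : ℝ) + 2 ≤ ((k + 1 : ℕ) : ℝ) * (2 * (Nat.log 2 N : ℕ) + 2) := by
      exact_mod_cast hm
    have hb : ((k + 1 : ℕ) : ℝ) * (2 * (Nat.log 2 N : ℕ) + 2) ≤ R * (2 * R + 2) := by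
      gcongr
    push_cast
    nlinarith
  · exact h3 s l rfl
end

section
/- Every finite nilpotent semigroup is a quotient of a subdirect product of a finite group and a finite commutative semigroup: if S is a finite semigroup whose only idempotent is a zero element, then there exist a finite group G, a finite commutative semigroup T, a subsemigroup U of the direct product G × T, and a surjective semigroup morphism φ : U → S. -/
/-- `S` is a quotient of a subdirect product of `G` and `T`: there are a
subsemigroup `U` of the direct product `G × T` (with componentwise
multiplication) and a surjective semigroup morphism `φ : U → S`. -/
def IsQuotientOfSubsemigroupOfProd (S : Type*) [Semigroup S]
    (G T : Type) [Group G] [CommSemigroup T] : Prop :=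
  ∃ (U : Subsemigroup (G × T)) (φ : U → S),
    (∀ a b : U, φ (a * b) = φ a * φ b) ∧ Function.Surjective φ

/-- Lengths truncated at `n`. -/
def TruncLen (n : ℕ) : Type := Fin (n + 1)

/-- Commutative semigroup of lengths truncated at `n`. -/
@[reducible] def truncSemigroup (n : ℕ) : CommSemigroup (TruncLen n) where
  mul a b := (⟨min (a.1 + b.1) n, by omega⟩ : Fin (n + 1))
  mul_assoc a b c := by
    apply Fin.ext
    change min (min (a.1 + b.1) n + c.1) n = min (a.1 + min (b.1 + c.1) n) n
    omega
  mul_comm a b := by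
    apply Fin.ext
    change min (a.1 + b.1) n = min (b.1 + a.1) n
    omega

theorem nilp_fix {S : Type*} [Semigroup S] [Finite S] (z : S)
    (hz : ∀ x : S, z * x = z ∧ x * z = z)
    (hid : ∀ y : S, y * y = y → y = z) (q x : S) (h : q * x = x) : x = z := by
  let : TopologicalSpace S := ⊥
  have : DiscreteTopology S := ⟨rfl⟩
  obtain ⟨m, hm, hmm⟩ := exists_idempotent_in_compact_subsemigroup
    (fun r : S => continuous_of_discreteTopology) {q : S | q * x = x} ⟨q, h⟩
    (Set.toFinite _).isCompact
    (by
      intro a ha b hb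
      simp only [Set.mem_ofPred_eq] at *
      rw [mul_assoc, hb, ha])
  have := hid m hmm
  subst this
  simp only [Set.mem_ofPred_eq] at hm
  rw [← hm, (hz x).1]

theorem nilp_long {S : Type*} [Semigroup S] [Finite S] (z : S)
    (hz : ∀ x : S, z * x = z ∧ x * z = z)
    (hid : ∀ y : S, y * y = y → y = z) {A : Type*} (e : FreeSemigroup A →ₙ* S)
    (w : FreeSemigroup A) :
    e w = z ∨ w.length + ({y | y = e w ∨ ∃ s, y = s * e w} : Set S).ncard ≤ Nat.card S + 1 := by
  induction w using FreeSemigroup.recOnMul with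
  | ih1 a =>
    right
    have := Set.ncard_le_card ({y | y = e (.of a) ∨ ∃ s, y = s * e (.of a)} : Set S)
    rw [FreeSemigroup.length_of]
    omega
  | ih2 a w _ ih =>
    rcases ih with h | h
    · left
      rw [map_mul, h, (hz _).2]
    · by_cases hw : e w = z
      · left
        rw [map_mul, hw, (hz _).2]
      right
      have hlt : ({y | y = e (.of a * w) ∨ ∃ s, y = s * e (.of a * w)} : Set S).ncard <
          ({y | y = e w ∨ ∃ s, y = s * e w} : Set S).ncard := by
        apply Set.ncard_lt_ncard _ (Set.toFinite _)
        rw [Set.ssubset_iff_of_subset]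
        · refine ⟨e w, Or.inl rfl, ?_⟩
          rintro (h1 | ⟨s, h1⟩)
          · exact hw (nilp_fix z hz hid (e (.of a)) _ (by rw [← map_mul]; exact h1.symm))
          · exact hw (nilp_fix z hz hid (s * e (.of a)) _
              (by rw [mul_assoc, ← map_mul]; exact h1.symm))
        · rintro y (rfl | ⟨s, rfl⟩)
          · exact Or.inr ⟨e (.of a), by rw [map_mul]⟩
          · exact Or.inr ⟨s * e (.of a), by rw [map_mul, mul_assoc]⟩
      rw [FreeSemigroup.length_mul, FreeSemigroup.length_of]
      omega

theorem exists_perm_extend {X : Type*} [Finite X] (s : Set X) (f : X → X)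
    (hf : Set.InjOn f s) : ∃ g : Equiv.Perm X, ∀ x ∈ s, g x = f x := by
  classical
  have := Fintype.ofFinite X
  let e : {x // x ∈ s} ≃ {y // y ∈ f '' s} := Equiv.Set.imageOfInjOn f s hf
  refine ⟨e.extendSubtype, fun x hx => ?_⟩
  rw [Equiv.extendSubtype_apply_of_mem _ _ hx]
  rfl

/-- Short words. -/
abbrev ShortWord (A : Type) (n : ℕ) := {l : List A // l.length ≤ n}

theorem exists_separating (A : Type) [Finite A] (n : ℕ) :
    ∃ g : FreeSemigroup A →ₙ* Equiv.Perm (ShortWord A n),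
      ∀ w : FreeSemigroup A, w.length ≤ n →
        (g w ⟨[], Nat.zero_le _⟩).1 = w.head :: w.tail := by
  have : Finite (ShortWord A n) := (List.finite_length_le A n).to_subtype
  have hex : ∀ a : A, ∃ g : Equiv.Perm (ShortWord A n), ∀ l : ShortWord A n,
      l.1.length < n → (g l).1 = a :: l.1 := by
    intro a
    obtain ⟨g, hg⟩ := exists_perm_extend {l : ShortWord A n | l.1.length < n}
      (fun l => if h : l.1.length < n then ⟨a :: l.1, h⟩ else l) (by
        intro x hx y hy hxy
        simp only [Set.mem_ofPred_eq] at hx hy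
        simp only [hx, hy, dite_true, Subtype.mk.injEq, List.cons.injEq, true_and] at hxy
        exact Subtype.ext hxy)
    refine ⟨g, fun l hl => ?_⟩
    rw [hg l hl]
    simp [hl]
  choose g hg using hex
  refine ⟨FreeSemigroup.lift g, fun w => ?_⟩
  induction w using FreeSemigroup.recOnMul with
  | ih1 a =>
    intro h
    rw [FreeSemigroup.length_of] at h
    rw [FreeSemigroup.lift_of, hg a _ (by simp; omega)]
    rfl
  | ih2 a w _ ih =>
    intro h
    rw [FreeSemigroup.length_mul, FreeSemigroup.length_of] at h
    have := ih (by omega)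
    rw [map_mul, Equiv.Perm.mul_apply, FreeSemigroup.lift_of, hg a _ ?_, this]
    · rfl
    · rw [this]
      change w.tail.length + 1 < n
      change 1 + (w.tail.length + 1) ≤ n at h
      omega

/-- Every finite nilpotent semigroup (a finite semigroup whose only idempotent
is a zero element `z`) is a quotient of a subdirect product of a finite group
and a finite commutative semigroup. -/
theorem nilpotent_quotient_of_subdirect_product
    {S : Type*} [Semigroup S] [Fintype S] (z : S)
    (hz : ∀ x : S, z * x = z ∧ x * z = z)
    (hid : ∀ y : S, y * y = y → y = z) :
    ∃ (G T : Type) (hG : Group G) (hT : CommSemigroup T),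
      Finite G ∧ Finite T ∧
      @IsQuotientOfSubsemigroupOfProd S _ G T hG hT := by
  let n := Nat.card S + 1
  let A := Fin (Fintype.card S)
  let e : FreeSemigroup A →ₙ* S := FreeSemigroup.lift (Fintype.equivFin S).symm
  obtain ⟨g, hg⟩ := exists_separating A n
  have : Finite (ShortWord A n) := (List.finite_length_le A n).to_subtype
  let hT := truncSemigroup n
  have hlong : ∀ w : FreeSemigroup A, n ≤ w.length → e w = z := by
    intro w hw
    rcases nilp_long z hz hid e w with h | h
    · exact h
    · have : 0 < ({y | y = e w ∨ ∃ s, y = s * e w} : Set S).ncard :=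
        (Set.ncard_pos (Set.toFinite _)).2 ⟨e w, Or.inl rfl⟩
      omega
  let t : FreeSemigroup A →ₙ* TruncLen n :=
    { toFun := fun w => (⟨min w.length n, by omega⟩ : Fin (n + 1))
      map_mul' := fun x y => by
        apply Fin.ext
        change min (x * y).length n = min (min x.length n + min y.length n) n
        rw [FreeSemigroup.length_mul]
        omega }
  let f : FreeSemigroup A →ₙ* Equiv.Perm (ShortWord A n) × TruncLen n := g.prod t
  have key : ∀ x y, f x = f y → e x = e y := by
    intro x y h
    have h1 : g x = g y := congrArg Prod.fst h
    have h2 : min x.length n = min y.length n := congrArg (fun p => p.2.1) h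
    by_cases hx : n ≤ x.length
    · rw [hlong x hx, hlong y (by omega)]
    · have hx' := hg x (by omega)
      rw [h1, hg y (by omega)] at hx'
      simp only [List.cons.injEq] at hx'
      rw [FreeSemigroup.ext hx'.1 hx'.2]
  refine ⟨Equiv.Perm (ShortWord A n), TruncLen n, inferInstance, hT, inferInstance,
    inferInstanceAs (Finite (Fin (n + 1))), ⟨MulHom.srange f, fun u => e u.2.choose, ?_, ?_⟩⟩
  · intro a b
    rw [← map_mul]
    apply key
    rw [map_mul, a.2.choose_spec, b.2.choose_spec, (a * b).2.choose_spec]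
    rfl
  · intro s
    refine ⟨⟨f (.of (Fintype.equivFin S s)), _, rfl⟩, ?_⟩
    have : e (.of (Fintype.equivFin S s)) = s := by simp [e]
    conv_rhs => rw [← this]
    apply key
    exact Exists.choose_spec (p := fun w => f w = f (.of (Fintype.equivFin S s))) _
end

section
/- Let V be a finite set with n = |V| ≥ 2 elements and let S = (V × {1, …, n−1} × V) ∪ {0}, where 0 is an extra element, with multiplication defined by: 0 is a zero element, and (v, i, w)·(x, j, y) = (v, i+j, y) if w = x and i + j ≤ n−1, and (v, i, w)·(x, j, y) = 0 otherwise. Then this multiplication is associative (so S is a semigroup), and S is nilpotent: the only idempotent element of S is the zero element 0. -/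
/-- Multiplication on `S = (V × {1, …, n−1} × V) ∪ {0}`, modeled as
`Option (V × Fin (n-1) × V)` with `none` as the zero element `0` and the middle
coordinate `i : Fin (n-1)` representing the integer `i + 1 ∈ {1, …, n−1}`:
`(v, i, w) · (x, j, y) = (v, i+j, y)` if `w = x` and `i + j ≤ n − 1` (as
represented integers), and `0` otherwise; all products involving `0` are `0`. -/
def layerMul {V : Type*} [DecidableEq V] (n : ℕ) :
    Option (V × Fin (n - 1) × V) → Option (V × Fin (n - 1) × V) →
      Option (V × Fin (n - 1) × V)
  | some (v, i, w), some (x, j, y) =>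
      if w = x then
        if h : (i : ℕ) + (j : ℕ) + 2 ≤ n - 1 then
          some (v, ⟨(i : ℕ) + (j : ℕ) + 1, by omega⟩, y)
        else none
      else none
  | _, _ => none

/-- For a finite set `V` with `n = |V| ≥ 2` elements, the multiplication on
`S = (V × {1, …, n−1} × V) ∪ {0}` is associative, `0` is a zero element, and
the resulting semigroup is nilpotent: its only idempotent is `0`. -/
theorem layerMul_assoc_and_nilpotent
    {V : Type*} [Fintype V] [DecidableEq V] (n : ℕ)
    (hn : Fintype.card V = n) (h2 : 2 ≤ n) :
    (∀ a b c : Option (V × Fin (n - 1) × V),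
      layerMul n (layerMul n a b) c = layerMul n a (layerMul n b c)) ∧
    (∀ a : Option (V × Fin (n - 1) × V),
      layerMul n none a = none ∧ layerMul n a none = none) ∧
    (∀ a : Option (V × Fin (n - 1) × V), layerMul n a a = a → a = none) := by
  have hl : ∀ a : Option (V × Fin (n - 1) × V), layerMul n none a = none := by
    intro a; simp [layerMul]
  have hr : ∀ a : Option (V × Fin (n - 1) × V), layerMul n a none = none := by
    intro a; simp [layerMul]
  refine ⟨?_, fun a => ⟨hl a, hr a⟩, ?_⟩
  · rintro (_ | ⟨v, i, w⟩) b c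
    · simp only [hl]
    rcases b with _ | ⟨x, j, y⟩
    · simp only [hl, hr]
    rcases c with _ | ⟨p, k, q⟩
    · simp only [hr]
    by_cases h1 : w = x <;> by_cases h3 : y = p <;>
      by_cases h4 : (i : ℕ) + (j : ℕ) + 2 ≤ n - 1 <;>
      by_cases h5 : (j : ℕ) + (k : ℕ) + 2 ≤ n - 1 <;>
      simp [layerMul, h1, h3, h4, h5] <;> grind
  · rintro (_ | ⟨v, i, w⟩) h
    · rfl
    · simp only [layerMul] at h
      split_ifs at h
      simp [Fin.ext_iff] at h
      omega
end

section
/- Let V be a finite set with n = |V| ≥ 2 elements, let E ⊆ V × V be a directed graph, and let S = (V × {1, …, n−1} × V) ∪ {0} be the semigroup with zero element 0 and multiplication (v, i, w)·(x, j, y) = (v, i+j, y) if w = x and i + j ≤ n−1, and 0 otherwise. Then for all s, t ∈ V, the element (s, n−1, t) belongs to the subsemigroup of S generated by the set {(v, 1, w) : v = w or (v, w) ∈ E} if and only if t is reachable from s in the graph (V, E), i.e., (s, t) lies in the reflexive–transitive closure of E. -/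
/-- Membership in the subsemigroup generated by `X`, i.e. the smallest subset
containing `X` and closed under the multiplication `mul`. -/
inductive InGeneratedSubsemigroup {α : Type*} (mul : α → α → α) (X : Set α) : α → Prop
  | base {x : α} : x ∈ X → InGeneratedSubsemigroup mul X x
  | mul {a b : α} : InGeneratedSubsemigroup mul X a → InGeneratedSubsemigroup mul X b →
      InGeneratedSubsemigroup mul X (mul a b)

/-- Vertices reachable from `s` by exactly `k` lazy steps. -/
def lazyBall {V : Type*} (E : Set (V × V)) (s : V) : ℕ → Set V
  | 0 => {s}
  | k + 1 => {w | ∃ v ∈ lazyBall E s k, v = w ∨ (v, w) ∈ E}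

theorem lazyBall_growth {V : Type*} [Fintype V] (E : Set (V × V)) (s : V) (k : ℕ) :
    k + 1 ≤ (lazyBall E s k).ncard ∨
      ∀ v ∈ lazyBall E s k, ∀ w, (v, w) ∈ E → w ∈ lazyBall E s k := by
  induction k with
  | zero => left; simp [lazyBall]
  | succ k ih =>
    have hsub : lazyBall E s k ⊆ lazyBall E s (k + 1) := fun v hv => ⟨v, hv, Or.inl rfl⟩
    by_cases hc : ∀ v ∈ lazyBall E s k, ∀ w, (v, w) ∈ E → w ∈ lazyBall E s k
    · right
      rintro v ⟨u, hu, huv⟩ w hw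
      have hv : v ∈ lazyBall E s k := by
        rcases huv with rfl | h
        · exact hu
        · exact hc u hu v h
      exact hsub (hc v hv w hw)
    · left
      have h1 := ih.resolve_right hc
      push Not at hc
      obtain ⟨v, hv, w, hw, hnw⟩ := hc
      have hlt : (lazyBall E s k).ncard < (lazyBall E s (k + 1)).ncard := by
        apply Set.ncard_lt_ncard _ (Set.toFinite _)
        exact ⟨hsub, fun h => hnw (h ⟨v, hv, Or.inr hw⟩)⟩
      omega

theorem lazyBall_self {V : Type*} (E : Set (V × V)) (s : V) (k : ℕ) :
    s ∈ lazyBall E s k := by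
  induction k with
  | zero => rfl
  | succ k ih => exact ⟨s, ih, Or.inl rfl⟩

theorem mem_lazyBall_of_reachable {V : Type*} [Fintype V] (E : Set (V × V)) (s t : V)
    (k : ℕ) (hk : Fintype.card V ≤ k + 1)
    (h : Relation.ReflTransGen (fun a b : V => (a, b) ∈ E) s t) : t ∈ lazyBall E s k := by
  rcases lazyBall_growth E s k with h1 | h1
  · have : lazyBall E s k = Set.univ := by
      apply Set.eq_of_subset_of_ncard_le (Set.subset_univ _)
      rw [Set.ncard_univ, Nat.card_eq_fintype_card]
      omega
    rw [this]; trivial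
  · induction h with
    | refl => exact lazyBall_self E s k
    | tail _ hb ih => exact h1 _ ih _ hb

/-- For a finite set `V` with `n = |V| ≥ 2` elements and a directed graph
`E ⊆ V × V`, in the semigroup `S = (V × {1, …, n−1} × V) ∪ {0}` the element
`(s, n−1, t)` (middle coordinate `⟨n-2, _⟩ : Fin (n-1)` representing `n−1`)
lies in the subsemigroup generated by `{(v, 1, w) : v = w or (v, w) ∈ E}`
(middle coordinate `⟨0, _⟩` representing `1`) if and only if `t` is reachable
from `s` in `(V, E)`. -/
theorem layer_semigroup_membership_iff_reachable
    {V : Type*} [Fintype V] [DecidableEq V] (n : ℕ)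
    (hn : Fintype.card V = n) (h2 : 2 ≤ n) (E : Set (V × V)) (s t : V) :
    InGeneratedSubsemigroup (layerMul n)
        {p : Option (V × Fin (n - 1) × V) |
          ∃ v w : V, p = some (v, ⟨0, by omega⟩, w) ∧ (v = w ∨ (v, w) ∈ E)}
        (some (s, ⟨n - 2, by omega⟩, t)) ↔
      Relation.ReflTransGen (fun a b : V => (a, b) ∈ E) s t := by
  constructor
  · intro h
    have key : ∀ p, InGeneratedSubsemigroup (layerMul n)
        {p : Option (V × Fin (n - 1) × V) |
          ∃ v w : V, p = some (v, ⟨0, by omega⟩, w) ∧ (v = w ∨ (v, w) ∈ E)} p →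
        ∀ v i w, p = some (v, i, w) →
          Relation.ReflTransGen (fun a b : V => (a, b) ∈ E) v w := by
      intro p hp
      induction hp with
      | base hx =>
        rintro v i w rfl
        obtain ⟨v', w', he, hvw⟩ := hx
        simp only [Option.some.injEq, Prod.mk.injEq] at he
        obtain ⟨rfl, _, rfl⟩ := he
        rcases hvw with rfl | hE
        · exact .refl
        · exact .single hE
      | @mul a b _ _ iha ihb =>
        intro v i w he
        rcases a with _ | ⟨a1, ai, a2⟩
        · simp [layerMul] at he
        rcases b with _ | ⟨b1, bi, b2⟩
        · simp [layerMul] at he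
        simp only [layerMul] at he
        split_ifs at he with h1 h3
        simp only [Option.some.injEq, Prod.mk.injEq] at he
        obtain ⟨rfl, _, rfl⟩ := he
        subst h1
        exact (iha _ _ _ rfl).trans (ihb _ _ _ rfl)
    exact key _ h _ _ _ rfl
  · intro h
    have hm := mem_lazyBall_of_reachable E s t (n - 2 + 1) (by omega) h
    have key : ∀ k (hk : k < n - 1) v, v ∈ lazyBall E s (k + 1) →
        InGeneratedSubsemigroup (layerMul n)
        {p : Option (V × Fin (n - 1) × V) |
          ∃ v w : V, p = some (v, ⟨0, by omega⟩, w) ∧ (v = w ∨ (v, w) ∈ E)}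
        (some (s, ⟨k, hk⟩, v)) := by
      intro k
      induction k with
      | zero =>
        rintro hk v ⟨u, hu, huv⟩
        obtain rfl : u = s := hu
        exact .base ⟨u, v, rfl, huv⟩
      | succ k ih =>
        rintro hk v ⟨u, hu, huv⟩
        have h3 := InGeneratedSubsemigroup.mul (ih (by omega) u hu)
          (.base ⟨u, v, rfl, huv⟩)
        have h4 : k + 2 ≤ n - 1 := by omega
        simpa [layerMul, h4] using h3
    exact key _ _ _ hm
end
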